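/- (Lemma 1, part 4.) Suppose every marginal φ^θ_ℓ has full support. There exists ε̄ > 0 such that for every ε ∈ (0, ε̄) there exists b > 0 with: for every state θ, every agent ℓ, and every time t, the event I_{tε}(θ) that all agents' empirical measures are within ε of their θ-marginals is contained in the event that agent ℓ's posterior on its identification cell Q_ℓ ∋ θ is at least q = 1 − e^{−tb}/p^θ: I_{tε}(θ) ⊆ B^q_{ℓt}(Q_ℓ). -/

import Mathlib

/-!
Fix an agent and two states with distinct marginals `g` (the true one) and `f`. The likelihood
ratio of a length-`t` history is `exp (-t ∑ x, emp x * log (g x / f x))`, where `emp` is the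
empirical measure. If `emp` is within `ε` of `g` in total variation, the exponent differs from
`-t * KL(g, f)` by at most `2 ε M t`, where `M` bounds the log-ratios (full support). Since
`KL(g, f) > 0` (Gibbs) and there are finitely many pairs of states and agents, these divergences
have a common lower bound `K > 0`. So for `ε < K / (2M)` every state outside the cell of the true
state has likelihood at most `exp (-t b)` times the true one, with `b = K - 2 ε M > 0`. Bayes' rule
then bounds the posterior of the complement of the cell by `exp (-t b) / p θ`.
-/

open scoped Classical

/-- Total variation norm `‖f‖_TV = (1/2) Σ_x |f x|` on a finite set. -/
noncomputable def tv {X : Type*} [Fintype X] (f : X → ℝ) : ℝ := (1 / 2) * ∑ x, |f x|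

/-- Empirical measure of agent ℓ's first `t` signals along the signal sequence ω. -/
noncomputable def empOm {L : ℕ} {X : Fin L → Type*} [∀ ℓ, Fintype (X ℓ)]
    (ω : ℕ → ∀ ℓ, X ℓ) (t : ℕ) (ℓ : Fin L) (x : X ℓ) : ℝ :=
  ((Finset.univ.filter fun s : Fin t => ω s.val ℓ = x).card : ℝ) / t

/-- Bayesian posterior probability of the set of states `Q` given a length-`t` history of
i.i.d. signals, with prior `p` and state-dependent signal distributions `φ`. -/
noncomputable def post {Θ : Type*} [Fintype Θ] {X : Type*} [Fintype X]
    (p : Θ → ℝ) (φ : Θ → X → ℝ) (Q : Finset Θ) {t : ℕ} (h : Fin t → X) : ℝ :=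
  (∑ θ ∈ Q, p θ * ∏ s, φ θ (h s)) / (∑ θ', p θ' * ∏ s, φ θ' (h s))

/-- Kullback-Leibler divergence of `g` from `f` on a finite set (for positive `f`, `g`). -/
noncomputable def finKL {X : Type*} [Fintype X] (g f : X → ℝ) : ℝ :=
  ∑ x, g x * Real.log (g x / f x)

/-- Gibbs' inequality, strict form. -/
lemma finKL_pos {X : Type*} [Fintype X] (g f : X → ℝ) (hg : ∀ x, 0 < g x) (hf : ∀ x, 0 < f x)
    (hg1 : ∑ x, g x = 1) (hf1 : ∑ x, f x = 1) (hne : f ≠ g) : 0 < finKL g f := by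
  have key : ∀ x, g x - f x ≤ g x * Real.log (g x / f x) := by
    intro x
    have h1 := Real.log_le_sub_one_of_pos (div_pos (hf x) (hg x))
    have h2 : Real.log (g x / f x) = -Real.log (f x / g x) := by
      rw [← Real.log_inv, inv_div]
    have h3 : g x * (f x / g x) = f x := mul_div_cancel₀ _ (hg x).ne'
    rw [h2]
    nlinarith [mul_le_mul_of_nonneg_left h1 (hg x).le]
  obtain ⟨x₀, hx₀⟩ := Function.ne_iff.mp hne
  have strict : g x₀ - f x₀ < g x₀ * Real.log (g x₀ / f x₀) := by
    have hr : f x₀ / g x₀ ≠ 1 := fun h => hx₀ ((div_eq_one_iff_eq (hg x₀).ne').mp h)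
    have h1 := Real.log_lt_sub_one_of_pos (div_pos (hf x₀) (hg x₀)) hr
    have h2 : Real.log (g x₀ / f x₀) = -Real.log (f x₀ / g x₀) := by
      rw [← Real.log_inv, inv_div]
    have h3 : g x₀ * (f x₀ / g x₀) = f x₀ := mul_div_cancel₀ _ (hg x₀).ne'
    rw [h2]
    nlinarith [mul_lt_mul_of_pos_left h1 (hg x₀)]
  have := Finset.sum_lt_sum (fun x _ => key x) ⟨x₀, Finset.mem_univ _, strict⟩
  rw [Finset.sum_sub_distrib, hg1, hf1, sub_self] at this
  exact this

/-- The positive values of a real function on a finite type are bounded away from `0`. -/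
lemma exists_pos_lower_bound {ι : Type*} [Finite ι] (f : ι → ℝ) :
    ∃ c > 0, ∀ i, 0 < f i → c ≤ f i := by
  have h : ∀ i, ∀ᶠ c in nhdsWithin (0 : ℝ) (Set.Ioi 0), 0 < f i → c ≤ f i := by
    intro i
    by_cases hi : 0 < f i
    · filter_upwards [Ioo_mem_nhdsGT hi] with c hc _ using hc.2.le
    · exact Filter.Eventually.of_forall fun c h => absurd h hi
  obtain ⟨c, hc, hc0⟩ := ((Filter.eventually_all.mpr h).and self_mem_nhdsWithin).exists
  exact ⟨c, hc0, hc⟩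

/-- A history whose empirical measure is `ε`-close to `g` makes the likelihood of `f` exponentially
smaller than that of `g`, at rate `KL(g, f) - 2 ε M`. -/
lemma likelihood_le {L : ℕ} {X : Fin L → Type*} [∀ ℓ, Fintype (X ℓ)] (ℓ : Fin L)
    (g f : X ℓ → ℝ) (hg : ∀ x, 0 < g x) (hf : ∀ x, 0 < f x) (M ε : ℝ) (hM0 : 0 ≤ M)
    (hM : ∀ x, |Real.log (g x / f x)| ≤ M) (t : ℕ) (ht : 0 < t) (ω : ℕ → ∀ ℓ, X ℓ)
    (hω : tv (fun x => empOm ω t ℓ x - g x) ≤ ε) :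
    ∏ s : Fin t, f (ω s.val ℓ) ≤
      Real.exp (-(t * (finKL g f - 2 * ε * M))) * ∏ s : Fin t, g (ω s.val ℓ) := by
  have ht' : (0 : ℝ) < t := Nat.cast_pos.mpr ht
  have hsum : ∑ s : Fin t, Real.log (g (ω s.val ℓ) / f (ω s.val ℓ))
      = t * ∑ x, empOm ω t ℓ x * Real.log (g x / f x) := by
    rw [← Finset.sum_fiberwise Finset.univ (fun s : Fin t => ω s.val ℓ), Finset.mul_sum]
    refine Finset.sum_congr rfl fun x _ => ?_
    rw [Finset.sum_congr rfl (g := fun _ => Real.log (g x / f x))]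
    · rw [Finset.sum_const, nsmul_eq_mul, empOm]
      field_simp
    · intro s hs
      rw [(Finset.mem_filter.mp hs).2]
  have hdev : finKL g f - 2 * ε * M ≤ ∑ x, empOm ω t ℓ x * Real.log (g x / f x) := by
    have h1 : finKL g f - ∑ x, empOm ω t ℓ x * Real.log (g x / f x)
        ≤ ∑ x, |empOm ω t ℓ x - g x| * M := by
      rw [finKL, ← Finset.sum_sub_distrib]
      refine Finset.sum_le_sum fun x _ => ?_
      calc g x * Real.log (g x / f x) - empOm ω t ℓ x * Real.log (g x / f x)
          = -((empOm ω t ℓ x - g x) * Real.log (g x / f x)) := by ring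
        _ ≤ |empOm ω t ℓ x - g x| * |Real.log (g x / f x)| := by
          rw [← abs_mul]; exact neg_le_abs _
        _ ≤ _ := mul_le_mul_of_nonneg_left (hM x) (abs_nonneg _)
    rw [← Finset.sum_mul] at h1
    have h2 : ∑ x, |empOm ω t ℓ x - g x| ≤ 2 * ε := by
      unfold tv at hω; linarith
    linarith [mul_le_mul_of_nonneg_right h2 hM0]
  have hprod : ∏ s : Fin t, f (ω s.val ℓ)
      = Real.exp (-∑ s : Fin t, Real.log (g (ω s.val ℓ) / f (ω s.val ℓ)))
        * ∏ s : Fin t, g (ω s.val ℓ) := by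
    rw [← Finset.sum_neg_distrib, Real.exp_sum, ← Finset.prod_mul_distrib]
    refine Finset.prod_congr rfl fun s _ => ?_
    rw [Real.exp_neg, Real.exp_log (div_pos (hg _) (hf _)), inv_div,
      div_mul_cancel₀ _ (hg _).ne']
  rw [hprod, hsum]
  have hP : 0 ≤ ∏ s : Fin t, g (ω s.val ℓ) := Finset.prod_nonneg fun s _ => (hg _).le
  gcongr

/-- If every state outside `Q` has likelihood at most `c` times that of `θ`, Bayes' rule gives
`Q` posterior probability at least `1 - c / p θ`. -/
lemma one_sub_le_post {Θ : Type*} [Fintype Θ] {X : Type*} [Fintype X]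
    (p : Θ → ℝ) (hp0 : ∀ θ, 0 < p θ) (hp1 : ∑ θ, p θ = 1) (φ : Θ → X → ℝ)
    (hφ0 : ∀ θ x, 0 < φ θ x) (Q : Finset Θ) {t : ℕ} (h : Fin t → X) (θ : Θ) (c : ℝ)
    (hc0 : 0 ≤ c) (hc : ∀ θ' ∉ Q, ∏ s, φ θ' (h s) ≤ c * ∏ s, φ θ (h s)) :
    1 - c / p θ ≤ post p φ Q h := by
  have hlik : ∀ θ', 0 < ∏ s, φ θ' (h s) := fun θ' => Finset.prod_pos fun s _ => hφ0 _ _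
  have hterm : ∀ θ', 0 < p θ' * ∏ s, φ θ' (h s) := fun θ' => mul_pos (hp0 _) (hlik _)
  set D := ∑ θ', p θ' * ∏ s, φ θ' (h s) with hD
  have hDθ : p θ * ∏ s, φ θ (h s) ≤ D :=
    Finset.single_le_sum (f := fun θ' => p θ' * ∏ s, φ θ' (h s))
      (fun θ' _ => (hterm θ').le) (Finset.mem_univ θ)
  have hDpos : 0 < D := (hterm θ).trans_le hDθ
  have hsplit : ∑ θ' ∈ Q, p θ' * ∏ s, φ θ' (h s) + ∑ θ' ∈ Qᶜ, p θ' * ∏ s, φ θ' (h s) = D :=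
    Finset.sum_add_sum_compl _ _
  have hcompl : ∑ θ' ∈ Qᶜ, p θ' * ∏ s, φ θ' (h s) ≤ c * ∏ s, φ θ (h s) := by
    calc ∑ θ' ∈ Qᶜ, p θ' * ∏ s, φ θ' (h s)
        ≤ ∑ θ' ∈ Qᶜ, p θ' * (c * ∏ s, φ θ (h s)) :=
          Finset.sum_le_sum fun θ' hθ' =>
            mul_le_mul_of_nonneg_left (hc θ' (Finset.mem_compl.mp hθ')) (hp0 _).le
      _ ≤ ∑ θ', p θ' * (c * ∏ s, φ θ (h s)) :=
          Finset.sum_le_sum_of_subset_of_nonneg (Finset.subset_univ _)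
            fun θ' _ _ => mul_nonneg (hp0 _).le (mul_nonneg hc0 (hlik _).le)
      _ = c * ∏ s, φ θ (h s) := by rw [← Finset.sum_mul, hp1, one_mul]
  rw [post, ← hD, le_div_iff₀ hDpos]
  have h1 : c * ∏ s, φ θ (h s) ≤ c / p θ * D := by
    calc c * ∏ s, φ θ (h s) = c / p θ * (p θ * ∏ s, φ θ (h s)) := by
          have := (hp0 θ).ne'
          field_simp
      _ ≤ _ := mul_le_mul_of_nonneg_left hDθ (div_nonneg hc0 (hp0 θ).le)
  linarith

/-- Lemma 1, part 4. If every marginal has full support, there is ε̄ > 0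
such that for every ε ∈ (0, ε̄) there is b > 0 such that for all θ, ℓ and t, the event
`I_{tε}(θ)` (all agents' empirical measures within ε of their θ-marginals) is contained in
the event that agent ℓ's posterior on its identification cell `Q_ℓ ∋ θ` is at least
`q = 1 − e^{−tb}/p^θ`, i.e. `I_{tε}(θ) ⊆ B^q_{ℓt}(Q_ℓ)`. -/
theorem statement7
    {Θ : Type*} [Fintype Θ] {L : ℕ} (X : Fin L → Type*) [∀ ℓ, Fintype (X ℓ)]
    (p : Θ → ℝ) (hp0 : ∀ θ, 0 < p θ) (hp1 : ∑ θ, p θ = 1)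
    (φ : Θ → ∀ ℓ, X ℓ → ℝ)
    (hφ0 : ∀ θ ℓ x, 0 < φ θ ℓ x) (hφ1 : ∀ θ ℓ, ∑ x, φ θ ℓ x = 1) :
    ∃ εbar > 0, ∀ ε : ℝ, 0 < ε → ε < εbar → ∃ b > 0,
      ∀ (θ : Θ) (ℓ : Fin L) (t : ℕ),
        {ω : ℕ → ∀ ℓ', X ℓ' | ∀ ℓ', tv (fun x => empOm ω t ℓ' x - φ θ ℓ' x) ≤ ε} ⊆
          {ω : ℕ → ∀ ℓ', X ℓ' |
            1 - Real.exp (-(t * b)) / p θ ≤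
              post p (fun θ' => φ θ' ℓ) (Finset.univ.filter fun θ' => φ θ' ℓ = φ θ ℓ)
                (fun s : Fin t => ω s.val ℓ)} := by
  obtain ⟨K, hK0, hK⟩ := exists_pos_lower_bound
    (fun i : Θ × Θ × Fin L => finKL (φ i.1 i.2.2) (φ i.2.1 i.2.2))
  obtain ⟨M, hM0, hM⟩ : ∃ M > 0, ∀ θ θ' ℓ x, |Real.log (φ θ ℓ x / φ θ' ℓ x)| ≤ M := by
    obtain ⟨M, hM⟩ := Finite.bddAbove_range
      (fun i : Θ × Θ × (Σ ℓ, X ℓ) =>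
        |Real.log (φ i.1 i.2.2.1 i.2.2.2 / φ i.2.1 i.2.2.1 i.2.2.2)|)
    exact ⟨max M 1, lt_max_of_lt_right one_pos, fun θ θ' ℓ x =>
      (hM ⟨(θ, θ', ⟨ℓ, x⟩), rfl⟩).trans (le_max_left _ _)⟩
  refine ⟨K / (2 * M), by positivity, fun ε hε hεK => ?_⟩
  rw [lt_div_iff₀ (by positivity)] at hεK
  refine ⟨K - 2 * ε * M, by linarith, fun θ ℓ t ω hω => ?_⟩
  refine one_sub_le_post p hp0 hp1 _ (fun θ' x => hφ0 θ' ℓ x) _ _ θ _ (Real.exp_pos _).le ?_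
  intro θ' hθ'
  have hne : φ θ' ℓ ≠ φ θ ℓ := by simpa using hθ'
  rcases Nat.eq_zero_or_pos t with rfl | ht
  -- The empirical measure has junk value `0` at `t = 0`, where all likelihoods equal `1`.
  · simp
  have hpos := finKL_pos _ _ (hφ0 θ ℓ) (hφ0 θ' ℓ) (hφ1 θ ℓ) (hφ1 θ' ℓ) hne
  have hKL : K ≤ finKL (φ θ ℓ) (φ θ' ℓ) := hK (θ, θ', ℓ) hpos
  refine (likelihood_le ℓ (φ θ ℓ) (φ θ' ℓ) (hφ0 θ ℓ) (hφ0 θ' ℓ) M ε hM0.le (hM θ θ' ℓ) t ht ω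
    (hω ℓ)).trans ?_
  have hP : 0 ≤ ∏ s : Fin t, φ θ ℓ (ω s.val ℓ) := Finset.prod_nonneg fun s _ => (hφ0 _ _ _).le
  gcongr
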